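/- arXiv:1609.03820 — 4 statements merged into one kernel-verified Lean document; each statement's English description precedes it below -/
import Mathlib

section
/- Let n ≥ 1 and let M = (m_{ij}) be an irreducible n×n matrix with natural number entries. Let λ be a real number and x ∈ ℝ^n a vector with all coordinates x_i nonnegative, x ≠ 0, and M x = λ x (entries of M regarded as real numbers). Then for every index i one has n·λ^n·x_i ≥ x_1 + x_2 + ⋯ + x_n. -/
/-!
If `M x ≤ λ x`, then `M ^ k x ≤ λ ^ k x`, so a nonzero (hence at least `1`) entry `(M ^ k) i j`
gives `x j ≤ λ ^ k x i`. A nonzero diagonal entry `(M ^ k) p p` at a coordinate with `x p > 0`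
forces `λ ≥ 1`. Cutting the cycles out of a walk from `i` to `j` produces a nonzero entry with
`k < n`, whence `x j ≤ λ ^ k x i ≤ λ ^ n x i` for every `j`.
-/

/-- An `n × n` matrix with natural number entries is *irreducible* if for all indices
`i, j` there exists `k ≥ 1` such that the `(i,j)` entry of `M ^ k` is nonzero. -/
def Matrix.NatIrreducible {n : ℕ} (M : Matrix (Fin n) (Fin n) ℕ) : Prop :=
  ∀ i j : Fin n, ∃ k : ℕ, 1 ≤ k ∧ (M ^ k) i j ≠ 0

open scoped Matrix

section Walks

variable {ι R : Type*} [Fintype ι] [DecidableEq ι] [Semiring R] [PartialOrder R]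
  [CanonicallyOrderedAdd R] [NoZeroDivisors R] {M : Matrix ι ι R} {i j : ι}

theorem matrix_pow_add_apply_ne_zero_iff (a b : ℕ) :
    (M ^ (a + b)) i j ≠ 0 ↔ ∃ v, (M ^ a) i v ≠ 0 ∧ (M ^ b) v j ≠ 0 := by
  simp [pow_add, Matrix.mul_apply]

theorem exists_lt_card_matrix_pow_apply_ne_zero (h : ∃ k, (M ^ k) i j ≠ 0) :
    ∃ k < Fintype.card ι, (M ^ k) i j ≠ 0 := by
  classical
  obtain ⟨k, hk, hmin⟩ : ∃ k, (M ^ k) i j ≠ 0 ∧ ∀ l < k, ¬ (M ^ l) i j ≠ 0 :=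
    ⟨Nat.find h, Nat.find_spec h, fun _ ↦ Nat.find_min h⟩
  have exists_vertex (m : Fin (k + 1)) : ∃ v, (M ^ (m : ℕ)) i v ≠ 0 ∧ (M ^ (k - m)) v j ≠ 0 := by
    rwa [← matrix_pow_add_apply_ne_zero_iff, Nat.add_sub_cancel' m.is_le]
  choose v hv_from hv_to using exists_vertex
  -- A repeated vertex would allow the walk to be shortened.
  have v_injective : Function.Injective v := by
    refine Function.Injective.of_lt_imp_ne fun a b hab hv ↦ ?_
    have shorter : (a : ℕ) + (k - b) < k := by omega
    exact hmin _ shorter <|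
      (matrix_pow_add_apply_ne_zero_iff _ _).2 ⟨v a, hv_from a, hv ▸ hv_to b⟩
  have card_le := Fintype.card_le_of_injective v v_injective
  rw [Fintype.card_fin] at card_le
  exact ⟨k, card_le, hk⟩

end Walks

/-- `x` is a subinvariant vector of `A` for `lam`: the coordinatewise inequality `A x ≤ lam x`
weakening the eigenvector equation. Nonnegativity of `x` is not part of the definition. -/
def IsSubinvariant {ι R : Type*} [Fintype ι] [Semiring R] [LE R]
    (A : Matrix ι ι R) (lam : R) (x : ι → R) : Prop :=
  A *ᵥ x ≤ lam • x

namespace IsSubinvariant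

variable {ι R : Type*} [Fintype ι]

theorem apply_le_mul_apply [Semiring R] [PartialOrder R] [IsOrderedRing R] {A : Matrix ι ι R}
    {lam : R} {x : ι → R} (h : IsSubinvariant A lam x) (hA : ∀ i j, 0 ≤ A i j) (hx : 0 ≤ x)
    {i j : ι} (hij : 1 ≤ A i j) : x j ≤ lam * x i :=
  calc
    x j ≤ A i j * x j := le_mul_of_one_le_left (hx j) hij
    _ ≤ (A *ᵥ x) i :=
      Finset.single_le_sum (f := fun l ↦ A i l * x l)
        (fun l _ ↦ mul_nonneg (hA i l) (hx l)) (Finset.mem_univ j)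
    _ ≤ lam * x i := h i

section PartialOrder

variable [DecidableEq ι] [CommSemiring R] [PartialOrder R] [IsOrderedRing R] {A : Matrix ι ι R}
  {lam : R} {x : ι → R}

theorem pow (h : IsSubinvariant A lam x) (hA : ∀ i j, 0 ≤ A i j) (hlam : 0 ≤ lam) (k : ℕ) :
    IsSubinvariant (A ^ k) (lam ^ k) x := by
  induction k with
  | zero => simp [IsSubinvariant]
  | succ k ih =>
    calc
      A ^ (k + 1) *ᵥ x = A *ᵥ (A ^ k *ᵥ x) := by rw [pow_succ', Matrix.mulVec_mulVec]
      _ ≤ A *ᵥ (lam ^ k • x) := fun i ↦ dotProduct_le_dotProduct_of_nonneg_left ih (hA i)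
      _ = lam ^ k • (A *ᵥ x) := Matrix.mulVec_smul ..
      _ ≤ lam ^ k • (lam • x) := smul_le_smul_of_nonneg_left h (pow_nonneg hlam k)
      _ = lam ^ (k + 1) • x := by rw [smul_smul, ← pow_succ]

theorem apply_le_pow_mul_apply (h : IsSubinvariant A lam x) (hA : ∀ i j, 0 ≤ A i j)
    (hlam : 0 ≤ lam) (hx : 0 ≤ x) {i j : ι} {k : ℕ} (hij : 1 ≤ (A ^ k) i j) :
    x j ≤ lam ^ k * x i :=
  (h.pow hA hlam k).apply_le_mul_apply (Matrix.pow_apply_nonneg hA k) hx hij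

end PartialOrder

section LinearOrder

variable [CommSemiring R] [LinearOrder R] [IsStrictOrderedRing R] {A : Matrix ι ι R} {lam : R}
  {x : ι → R}

theorem nonneg (h : IsSubinvariant A lam x) (hA : ∀ i j, 0 ≤ A i j) (hx : 0 < x) : 0 ≤ lam := by
  obtain ⟨hx_nonneg, p, hp⟩ := Pi.lt_def.1 hx
  have : 0 ≤ lam * x p := (dotProduct_nonneg_of_nonneg (hA p) hx_nonneg).trans (h p)
  exact nonneg_of_mul_nonneg_left this hp

theorem one_le_of_one_le_pow_apply_self [DecidableEq ι] (h : IsSubinvariant A lam x)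
    (hA : ∀ i j, 0 ≤ A i j) (hx : 0 ≤ x) {p : ι} (hp : 0 < x p) {k : ℕ} (hk : k ≠ 0)
    (hpp : 1 ≤ (A ^ k) p p) : 1 ≤ lam := by
  have hlam : 0 ≤ lam := h.nonneg hA (Pi.lt_def.2 ⟨hx, p, hp⟩)
  have le_mul : x p ≤ lam ^ k * x p := h.apply_le_pow_mul_apply hA hlam hx hpp
  exact (one_le_pow_iff_of_nonneg hlam hk).1 ((le_mul_iff_one_le_left hp).1 le_mul)

end LinearOrder

end IsSubinvariant

theorem one_le_map_natCast_pow_apply {ι R : Type*} [Fintype ι] [DecidableEq ι] [Semiring R]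
    [PartialOrder R] [IsOrderedRing R] {M : Matrix ι ι ℕ} {i j : ι} {k : ℕ}
    (h : (M ^ k) i j ≠ 0) : 1 ≤ (M.map (Nat.cast : ℕ → R) ^ k) i j := by
  have map_pow : M.map (Nat.cast : ℕ → R) ^ k = (M ^ k).map Nat.cast :=
    (M.map_pow (Nat.castRingHom R) k).symm
  rw [map_pow, Matrix.map_apply, ← Nat.cast_one]
  exact Nat.mono_cast (Nat.one_le_iff_ne_zero.2 h)

theorem coord_lower_bound_of_nonneg_eigenvector_general {ι R : Type*} [Fintype ι] [DecidableEq ι]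
    [CommSemiring R] [LinearOrder R] [IsStrictOrderedRing R] {M : Matrix ι ι ℕ}
    (hM : ∀ i j, ∃ k, 1 ≤ k ∧ (M ^ k) i j ≠ 0) {lam : R} {x : ι → R} (hx : 0 < x)
    (h : IsSubinvariant (M.map (Nat.cast : ℕ → R)) lam x) {m : ℕ} (hm : Fintype.card ι ≤ m + 1)
    (i : ι) : ∑ j, x j ≤ Fintype.card ι * lam ^ m * x i := by
  obtain ⟨hx_nonneg, p, hp⟩ := Pi.lt_def.1 hx
  have hA : ∀ i j, 0 ≤ M.map (Nat.cast : ℕ → R) i j := fun i j ↦ Nat.cast_nonneg (M i j)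
  have one_le_lam : 1 ≤ lam := by
    obtain ⟨k, hk, hpp⟩ := hM p p
    exact h.one_le_of_one_le_pow_apply_self hA hx_nonneg hp (Nat.ne_of_gt hk)
      (one_le_map_natCast_pow_apply hpp)
  have apply_le (j : ι) : x j ≤ lam ^ m * x i := by
    obtain ⟨k, hk_lt, hk⟩ := exists_lt_card_matrix_pow_apply_ne_zero
      ((hM i j).imp fun _ ↦ And.right)
    calc
      x j ≤ lam ^ k * x i :=
        h.apply_le_pow_mul_apply hA (h.nonneg hA hx) hx_nonneg (one_le_map_natCast_pow_apply hk)
      _ ≤ lam ^ m * x i :=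
        mul_le_mul_of_nonneg_right (pow_le_pow_right₀ one_le_lam (by omega)) (hx_nonneg i)
  calc
    ∑ j, x j ≤ ∑ _j : ι, lam ^ m * x i := Finset.sum_le_sum fun j _ ↦ apply_le j
    _ = Fintype.card ι * lam ^ m * x i := by simp [mul_assoc]

theorem coord_lower_bound_of_nonneg_eigenvector (n : ℕ) (hn : 1 ≤ n)
    (M : Matrix (Fin n) (Fin n) ℕ) (hM : M.NatIrreducible)
    (lam : ℝ) (x : Fin n → ℝ) (hx_nonneg : ∀ i, 0 ≤ x i) (hx : x ≠ 0)
    (heig : (M.map (fun a : ℕ => (a : ℝ))).mulVec x = lam • x) :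
    ∀ i : Fin n, (∑ j, x j) ≤ (n : ℝ) * lam ^ n * x i := by
  simpa using coord_lower_bound_of_nonneg_eigenvector_general hM
    (lt_of_le_of_ne hx_nonneg hx.symm) heig.le (m := n) (by simp)
end

section
/- Let n ≥ 1 and let M = (m_{ij}) be an irreducible n×n matrix with natural number entries. Let λ be a real number and x ∈ ℝ^n a vector with all coordinates nonnegative, x ≠ 0, and M x = λ x (entries of M regarded as real numbers). Then ‖M‖ ≤ Σ_{i,j=1}^{n} m_{ij} ≤ n·λ^{n+1}, where ‖M‖ denotes the maximum entry of M and the sums and products are taken in the real numbers. -/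
/-- The maximum entry of a matrix with natural number entries. -/
def Matrix.maxEntry {n : ℕ} (M : Matrix (Fin n) (Fin n) ℕ) : ℕ :=
  Finset.univ.sup fun p : Fin n × Fin n => M p.1 p.2

/-!
If `A` is nonnegative, `c ≥ 0` and `A x ≤ c x`, then `A ^ k x ≤ c ^ k x`, so
`(A ^ k) i j * x j ≤ c ^ k * x i` for all `i`, `j`. When the nonzero entries of `A` are at least
one, so are those of its powers, and irreducibility yields `x > 0` and `c ≥ 1`. By Cayley–Hamilton
the power linking `i` to `j` can be taken below the dimension `n`, whence
`x j ≤ c ^ (n - 1) * x i`. Comparing the `i`-th coordinate of `A x` with the least coordinate of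
`x` bounds each row sum by `c ^ n`.
-/

open Matrix Polynomial

section Semiring

variable {ι R : Type*} [Fintype ι] [DecidableEq ι]

/-- The elements of an ordered semiring that are zero or at least one, as a subsemiring, so that
matrices with such entries are closed under powers. -/
def zeroOrOneLe (R : Type*) [Semiring R] [PartialOrder R] [IsOrderedRing R] : Subsemiring R where
  carrier := {a | a = 0 ∨ 1 ≤ a}
  zero_mem' := Or.inl rfl
  one_mem' := Or.inr le_rfl
  add_mem' := by
    rintro a b (rfl | ha) (rfl | hb)
    · exact Or.inl (zero_add 0)
    · exact Or.inr (hb.trans_eq (zero_add b).symm)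
    · exact Or.inr (ha.trans_eq (add_zero a).symm)
    · exact Or.inr (le_add_of_le_of_nonneg ha (zero_le_one.trans hb))
  mul_mem' := by
    rintro a b (rfl | ha) (rfl | hb)
    · exact Or.inl (mul_zero 0)
    · exact Or.inl (zero_mul b)
    · exact Or.inl (mul_zero a)
    · exact Or.inr (one_le_mul_of_one_le_of_one_le ha hb)

theorem one_le_pow_apply [Semiring R] [PartialOrder R] [IsOrderedRing R] {A : Matrix ι ι R}
    (hA : ∀ i j, A i j ≠ 0 → 1 ≤ A i j) {k : ℕ} {i j : ι} (hk : (A ^ k) i j ≠ 0) :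
    1 ≤ (A ^ k) i j := by
  have hA_mem : A ∈ (zeroOrOneLe R).matrix := fun i j => or_iff_not_imp_left.mpr (hA i j)
  exact (pow_mem hA_mem k i j).resolve_left hk

theorem pow_mulVec_le [CommSemiring R] [PartialOrder R] [IsOrderedRing R] {A : Matrix ι ι R}
    (hA : ∀ i j, 0 ≤ A i j) {c : R} (hc : 0 ≤ c) {x : ι → R} (hAx : A *ᵥ x ≤ c • x) (k : ℕ) :
    (A ^ k) *ᵥ x ≤ c ^ k • x := by
  induction k with
  | zero => simp only [pow_zero, one_mulVec, one_smul, le_refl]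
  | succ k ih =>
    calc (A ^ (k + 1)) *ᵥ x = (A ^ k) *ᵥ (A *ᵥ x) := by rw [pow_succ, mulVec_mulVec]
      _ ≤ (A ^ k) *ᵥ (c • x) := fun i =>
        dotProduct_le_dotProduct_of_nonneg_left hAx (pow_apply_nonneg hA k i)
      _ = c • (A ^ k) *ᵥ x := mulVec_smul _ _ _
      _ ≤ c • c ^ k • x := smul_le_smul_of_nonneg_left ih hc
      _ = c ^ (k + 1) • x := by rw [smul_smul, pow_succ']

theorem pow_apply_mul_le [CommSemiring R] [PartialOrder R] [IsOrderedRing R] {A : Matrix ι ι R}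
    (hA : ∀ i j, 0 ≤ A i j) {c : R} (hc : 0 ≤ c) {x : ι → R} (hx : 0 ≤ x)
    (hAx : A *ᵥ x ≤ c • x) (k : ℕ) (i j : ι) : (A ^ k) i j * x j ≤ c ^ k * x i :=
  calc (A ^ k) i j * x j ≤ ∑ l, (A ^ k) i l * x l :=
        Finset.single_le_sum (f := fun l => (A ^ k) i l * x l)
          (fun l _ => mul_nonneg (pow_apply_nonneg hA k i l) (hx l)) (Finset.mem_univ j)
    _ ≤ c ^ k * x i := pow_mulVec_le hA hc hAx k i

end Semiring

theorem exists_lt_card_pow_apply_ne_zero {ι R : Type*} [Fintype ι] [DecidableEq ι] [CommRing R]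
    (A : Matrix ι ι R) {i j : ι} {k : ℕ} (hk : (A ^ k) i j ≠ 0) :
    ∃ l < Fintype.card ι, (A ^ l) i j ≠ 0 := by
  have : Nontrivial R := nontrivial_of_ne _ _ hk
  -- By Cayley–Hamilton, `A ^ k` is a linear combination of the powers below the dimension.
  by_contra! hzero
  refine hk ?_
  have hdeg : (X ^ k %ₘ A.charpoly).degree < Fintype.card ι := by
    simpa only [charpoly_degree_eq_dim] using degree_modByMonic_lt (X ^ k) A.charpoly_monic
  rw [pow_eq_aeval_mod_charpoly, aeval_def, eval₂_eq_sum, Polynomial.sum_def, Matrix.sum_apply]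
  refine Finset.sum_eq_zero fun l hl => ?_
  have hl_lt : l < Fintype.card ι :=
    WithBot.coe_lt_coe.mp ((le_degree_of_mem_supp l hl).trans_lt hdeg)
  rw [← Algebra.smul_def, Matrix.smul_apply, hzero l hl_lt, smul_zero]

section IsIrreducible

variable {ι R : Type*} [Fintype ι] [CommRing R] [LinearOrder R] [IsStrictOrderedRing R]
  {A : Matrix ι ι R} {c : R} {x : ι → R}

theorem nonneg_of_mulVec_le (hA : ∀ i j, 0 ≤ A i j) (hx : 0 ≤ x) (hx_ne : x ≠ 0)
    (hAx : A *ᵥ x ≤ c • x) : 0 ≤ c := by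
  obtain ⟨p, hp⟩ := (Pi.lt_def.mp (hx.lt_of_ne' hx_ne)).2
  have hcp : 0 ≤ c * x p := (dotProduct_nonneg_of_nonneg (hA p) hx).trans (hAx p)
  exact nonneg_of_mul_nonneg_left hcp hp

theorem pos_of_mulVec_le (hA : A.IsIrreducible) (hx : 0 ≤ x) (hx_ne : x ≠ 0)
    (hAx : A *ᵥ x ≤ c • x) (i : ι) : 0 < x i := by
  classical
  have hc : 0 ≤ c := nonneg_of_mulVec_le hA.nonneg hx hx_ne hAx
  obtain ⟨p, hp⟩ := (Pi.lt_def.mp (hx.lt_of_ne' hx_ne)).2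
  obtain ⟨k, -, hk⟩ := (isIrreducible_iff_exists_pow_pos hA.nonneg).mp hA i p
  have hpos : 0 < c ^ k * x i :=
    (mul_pos hk hp).trans_le (pow_apply_mul_le hA.nonneg hc hx hAx k i p)
  exact pos_of_mul_pos_right hpos (pow_nonneg hc k)

theorem one_le_of_mulVec_le (hA : A.IsIrreducible) (hA_one : ∀ i j, A i j ≠ 0 → 1 ≤ A i j)
    (hx : 0 ≤ x) (hx_ne : x ≠ 0) (hAx : A *ᵥ x ≤ c • x) : 1 ≤ c := by
  classical
  have hc : 0 ≤ c := nonneg_of_mulVec_le hA.nonneg hx hx_ne hAx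
  obtain ⟨p, -⟩ := Function.ne_iff.mp hx_ne
  obtain ⟨k, hk_pos, hk⟩ := (isIrreducible_iff_exists_pow_pos hA.nonneg).mp hA p p
  have hk_one : 1 ≤ (A ^ k) p p := one_le_pow_apply hA_one hk.ne'
  have hpow : (A ^ k) p p ≤ c ^ k :=
    le_of_mul_le_mul_right (pow_apply_mul_le hA.nonneg hc hx hAx k p p)
      (pos_of_mulVec_le hA hx hx_ne hAx p)
  exact (one_le_pow_iff_of_nonneg hc hk_pos.ne').mp (hk_one.trans hpow)

theorem le_pow_card_sub_one_mul (hA : A.IsIrreducible) (hA_one : ∀ i j, A i j ≠ 0 → 1 ≤ A i j)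
    (hx : 0 ≤ x) (hx_ne : x ≠ 0) (hAx : A *ᵥ x ≤ c • x) (i j : ι) :
    x j ≤ c ^ (Fintype.card ι - 1) * x i := by
  classical
  have hc : 1 ≤ c := one_le_of_mulVec_le hA hA_one hx hx_ne hAx
  obtain ⟨k, -, hk⟩ := (isIrreducible_iff_exists_pow_pos hA.nonneg).mp hA i j
  obtain ⟨l, hl_lt, hl⟩ := exists_lt_card_pow_apply_ne_zero A hk.ne'
  have hl_one : 1 ≤ (A ^ l) i j := one_le_pow_apply hA_one hl
  calc x j ≤ (A ^ l) i j * x j := le_mul_of_one_le_left (hx j) hl_one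
    _ ≤ c ^ l * x i := pow_apply_mul_le hA.nonneg (zero_le_one.trans hc) hx hAx l i j
    _ ≤ c ^ (Fintype.card ι - 1) * x i :=
      mul_le_mul_of_nonneg_right (pow_le_pow_right₀ hc (Nat.le_sub_one_of_lt hl_lt)) (hx i)

theorem row_sum_le_pow_card (hA : A.IsIrreducible) (hA_one : ∀ i j, A i j ≠ 0 → 1 ≤ A i j)
    (hx : 0 ≤ x) (hx_ne : x ≠ 0) (hAx : A *ᵥ x ≤ c • x) (i : ι) :
    ∑ j, A i j ≤ c ^ Fintype.card ι := by
  have hc : 0 ≤ c := nonneg_of_mulVec_le hA.nonneg hx hx_ne hAx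
  have : Nonempty ι := ⟨i⟩
  obtain ⟨q, hq⟩ := Finite.exists_min x
  refine le_of_mul_le_mul_right ?_ (pos_of_mulVec_le hA hx hx_ne hAx q)
  calc (∑ j, A i j) * x q = ∑ j, A i j * x q := Finset.sum_mul ..
    _ ≤ ∑ j, A i j * x j :=
      Finset.sum_le_sum fun j _ => mul_le_mul_of_nonneg_left (hq j) (hA.nonneg i j)
    _ ≤ c * x i := hAx i
    _ ≤ c * (c ^ (Fintype.card ι - 1) * x q) :=
      mul_le_mul_of_nonneg_left (le_pow_card_sub_one_mul hA hA_one hx hx_ne hAx q i) hc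
    _ = c ^ Fintype.card ι * x q := by
      rw [← mul_assoc, mul_pow_sub_one Fintype.card_ne_zero]

theorem sum_entries_le_n_mul_eigenvalue_pow_general (hA : A.IsIrreducible)
    (hA_one : ∀ i j, A i j ≠ 0 → 1 ≤ A i j) (hx : 0 ≤ x) (hx_ne : x ≠ 0)
    (hAx : A *ᵥ x ≤ c • x) :
    ∑ i, ∑ j, A i j ≤ Fintype.card ι * c ^ Fintype.card ι :=
  calc ∑ i, ∑ j, A i j ≤ ∑ _i : ι, c ^ Fintype.card ι :=
        Finset.sum_le_sum fun i _ => row_sum_le_pow_card hA hA_one hx hx_ne hAx i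
    _ = Fintype.card ι * c ^ Fintype.card ι := by
      rw [Finset.sum_const, Finset.card_univ, nsmul_eq_mul]

end IsIrreducible

theorem maxEntry_le_sum_entries {n : ℕ} (M : Matrix (Fin n) (Fin n) ℕ) :
    M.maxEntry ≤ ∑ i, ∑ j, M i j :=
  Finset.sup_le fun p _ =>
    calc M p.1 p.2 ≤ ∑ j, M p.1 j :=
          Finset.single_le_sum_of_canonicallyOrdered (Finset.mem_univ p.2)
      _ ≤ ∑ i, ∑ j, M i j :=
          Finset.single_le_sum_of_canonicallyOrdered (f := fun i => ∑ j, M i j)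
            (Finset.mem_univ p.1)

theorem isIrreducible_map_natCast {R : Type*} [Ring R] [LinearOrder R] [IsStrictOrderedRing R]
    {n : ℕ} {M : Matrix (Fin n) (Fin n) ℕ} (hM : M.NatIrreducible) :
    (M.map (Nat.cast : ℕ → R)).IsIrreducible := by
  have hM_nonneg : ∀ i j, 0 ≤ M.map (Nat.cast : ℕ → R) i j := fun i j => Nat.cast_nonneg (M i j)
  refine (isIrreducible_iff_exists_pow_pos hM_nonneg).mpr fun i j => ?_
  obtain ⟨k, hk_pos, hk⟩ := hM i j
  have hpow : M.map (Nat.cast : ℕ → R) ^ k = (M ^ k).map Nat.cast :=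
    (Matrix.map_pow M (Nat.castRingHom R) k).symm
  refine ⟨k, hk_pos, ?_⟩
  rw [hpow, map_apply]
  exact Nat.cast_pos.mpr (Nat.pos_of_ne_zero hk)

theorem sum_entries_le_n_mul_eigenvalue_pow (n : ℕ) (hn : 1 ≤ n)
    (M : Matrix (Fin n) (Fin n) ℕ) (hM : M.NatIrreducible)
    (lam : ℝ) (x : Fin n → ℝ) (hx_nonneg : ∀ i, 0 ≤ x i) (hx : x ≠ 0)
    (heig : (M.map (fun a : ℕ => (a : ℝ))).mulVec x = lam • x) :
    (M.maxEntry : ℝ) ≤ (∑ i, ∑ j, (M i j : ℝ)) ∧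
      (∑ i, ∑ j, (M i j : ℝ)) ≤ (n : ℝ) * lam ^ (n + 1) := by
  have hA : (M.map (Nat.cast : ℕ → ℝ)).IsIrreducible := isIrreducible_map_natCast hM
  have hA_one : ∀ i j, (M i j : ℝ) ≠ 0 → 1 ≤ (M i j : ℝ) := fun i j hij =>
    Nat.one_le_cast.mpr (Nat.pos_of_ne_zero (Nat.cast_ne_zero.mp hij))
  have hlam : 1 ≤ lam := one_le_of_mulVec_le hA hA_one hx_nonneg hx heig.le
  refine ⟨mod_cast maxEntry_le_sum_entries M, ?_⟩
  calc ∑ i, ∑ j, (M i j : ℝ) ≤ n * lam ^ n := by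
        simpa only [Matrix.map_apply, Fintype.card_fin] using
          sum_entries_le_n_mul_eigenvalue_pow_general hA hA_one hx_nonneg hx heig.le
    _ ≤ n * lam ^ (n + 1) := by gcongr; exact n.le_succ
end

section
/- Let α be a finite type equipped with a map ι : α → α satisfying ι(ι(a)) = a and ι(a) ≠ a for all a ∈ α, and suppose the cardinality of α is 2s with s ≥ 1. Let f : α → List α satisfy f(ι(a)) = reverse(map ι (f(a))) for all a ∈ α, and extend f to F : List α → List α by F(w) = flatten(map f w). Suppose F is expanding: for every a ∈ α, the length of F^{[n]}([a]) (the n-fold iterate of F applied to the one-letter word [a]) tends to infinity as n → ∞. Then for every a ∈ α, the length of F^{[s]}([a]) is at least 2. -/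
open Filter

/-!
If `F^[s] [a]` were shorter than two letters, then `[a], F [a], …, F^[s] [a]` would all be single
letters, since an expanding `F` erases no letter and so never shortens a word. These are `s + 1`
letters spread over `s` orbits of `ι`, so two of them, at times `i < j`, agree up to `ι`. As `F`
commutes with path reversal, the `i`-th letter is then periodic, with period dividing
`2 * (j - i)`, so the lengths of the iterates of `a` cannot tend to infinity.
-/

open Function

section Dynamics

variable {β : Type*} {F J : β → β} {x : β}

theorem iterate_notMem_periodicPts_of_tendsto_atTop {γ : Type*} [Preorder γ] [NoMaxOrder γ]
    {ℓ : β → γ} (h : Tendsto (fun n => ℓ (F^[n] x)) atTop atTop) (k : ℕ) :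
    F^[k] x ∉ periodicPts F := by
  rintro ⟨p, hp, hper⟩
  have hsubseq : Tendsto (fun n => p * n + k) atTop atTop :=
    (tendsto_add_atTop_nat k).comp (tendsto_id.const_mul_atTop' hp)
  have hconst : ∀ n, F^[p * n + k] x = F^[k] x := fun n => by
    rw [iterate_add_apply]
    exact hper.mul_const n
  refine not_tendsto_const_atTop (ℓ (F^[k] x)) (atTop : Filter ℕ) ?_
  simpa only [comp_def, hconst] using h.comp hsubseq

theorem iterate_mem_periodicPts_of_iterate_eq_involutive (hFJ : Function.Commute F J)
    (hJ : Involutive J) {m n : ℕ} (hmn : m < n) (h : F^[n] x = J (F^[m] x)) :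
    F^[m] x ∈ periodicPts F := by
  set y := F^[m] x
  have hflip : F^[n - m] y = J y := by
    rw [← iterate_add_apply, Nat.sub_add_cancel hmn.le, h]
  have hpos : 0 < n - m := Nat.sub_pos_of_lt hmn
  refine mk_mem_periodicPts (Nat.add_pos_left hpos (n - m)) ?_
  calc F^[(n - m) + (n - m)] y
      = F^[n - m] (J y) := by rw [iterate_add_apply, hflip]
    _ = J (F^[n - m] y) := hFJ.iterate_left (n - m) y
    _ = y := by rw [hflip, hJ]

end Dynamics

theorem exists_lt_map_eq_or_eq_involutive {α κ : Type*} [Fintype α] [Fintype κ] [LinearOrder κ]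
    {ι : α → α} (hι : Involutive ι) (hfix : ∀ a, ι a ≠ a) (x : κ → α)
    (hcard : Fintype.card α < 2 * Fintype.card κ) :
    ∃ i j, i < j ∧ (x j = x i ∨ x j = ι (x i)) := by
  have hne : ∃ i j, i ≠ j ∧ (x j = x i ∨ x j = ι (x i)) := by
    obtain ⟨p, q, hpq, h⟩ := Fintype.exists_ne_map_eq_of_card_lt (Sum.elim x (ι ∘ x))
      (by rwa [Fintype.card_sum, ← two_mul])
    rcases p with i | i <;> rcases q with j | j
    · exact ⟨i, j, fun hij => hpq (congrArg _ hij), .inl h.symm⟩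
    · exact ⟨j, i, fun hij => hfix (x j) (by subst hij; exact h.symm), .inr h⟩
    · exact ⟨i, j, fun hij => hfix (x i) (by subst hij; exact h), .inr h.symm⟩
    · exact ⟨i, j, fun hij => hpq (congrArg _ hij), .inl (hι.injective h).symm⟩
  obtain ⟨i, j, hij, h⟩ := hne
  rcases hij.lt_or_gt with hlt | hgt
  · exact ⟨i, j, hlt, h⟩
  · exact ⟨j, i, hgt, h.imp Eq.symm fun hji => hι.eq_iff.1 (Eq.symm hji)⟩

section Words

variable {α β : Type*}

theorem length_le_length_flatMap {f : α → List β} {w : List α} (hf : ∀ a ∈ w, f a ≠ []) :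
    w.length ≤ (w.flatMap f).length := by
  rw [List.length_flatMap, ← List.length_map (fun a => (f a).length)]
  exact List.length_le_sum_of_one_le _ <|
    List.forall_mem_map.2 fun a ha => List.length_pos_iff.2 (hf a ha)

theorem monotone_length_iterate_flatMap {f : α → List α} (hf : ∀ a, f a ≠ []) (w : List α) :
    Monotone fun n => ((List.flatMap f)^[n] w).length :=
  monotone_nat_of_le_succ fun n => by
    rw [iterate_succ_apply']
    exact length_le_length_flatMap fun a _ => hf a

theorem exists_iterate_flatMap_eq_singleton {f : α → List α} (hf : ∀ a, f a ≠ []) {a : α}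
    {m n : ℕ} (hmn : m ≤ n) (hn : ((List.flatMap f)^[n] [a]).length < 2) :
    ∃ x, (List.flatMap f)^[m] [a] = [x] := by
  have hpos : 1 ≤ ((List.flatMap f)^[m] [a]).length :=
    monotone_length_iterate_flatMap hf [a] (Nat.zero_le m)
  have hle : ((List.flatMap f)^[m] [a]).length ≤ ((List.flatMap f)^[n] [a]).length :=
    monotone_length_iterate_flatMap hf [a] hmn
  exact List.length_eq_one_iff.1 (by omega)

/-- The inverse of an edge-path, written as a word in oriented edges: the edges are traversed in
the opposite order, each replaced by its reversal `ι`. -/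
def reversePath (ι : α → α) (w : List α) : List α :=
  (w.map ι).reverse

theorem reversePath_involutive {ι : α → α} (hι : Involutive ι) : Involutive (reversePath ι) :=
  fun w => by
    simp only [reversePath, List.map_reverse, List.reverse_reverse, List.map_map, hι.comp_self,
      List.map_id]

theorem flatMap_commute_reversePath {ι : α → α} {f : α → List α}
    (hf : ∀ a, f (ι a) = reversePath ι (f a)) :
    Function.Commute (List.flatMap f) (reversePath ι) := fun w => by
  simp only [reversePath, List.flatMap_reverse, List.flatMap_map, List.map_flatMap, comp_def, hf,
    List.reverse_reverse]

end Words

theorem expanding_map_length_ge_two (α : Type*) [Fintype α]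
    (ι : α → α) (hinv : ∀ a, ι (ι a) = a) (hfix : ∀ a, ι a ≠ a)
    (s : ℕ) (hs : 1 ≤ s) (hcard : Fintype.card α = 2 * s)
    (f : α → List α) (hrev : ∀ a, f (ι a) = ((f a).map ι).reverse)
    (F : List α → List α) (hF : ∀ w, F w = (w.map f).flatten)
    (hexp : ∀ a : α, Tendsto (fun n => (F^[n] [a]).length) atTop atTop) :
    ∀ a : α, 2 ≤ (F^[s] [a]).length := by
  obtain rfl : F = List.flatMap f := funext hF
  have haperiodic : ∀ a k, (List.flatMap f)^[k] [a] ∉ periodicPts (List.flatMap f) :=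
    fun a => iterate_notMem_periodicPts_of_tendsto_atTop (hexp a)
  have hne : ∀ a, f a ≠ [] := fun a ha =>
    haperiodic a 1 (mk_mem_periodicPts one_pos (by simp [IsPeriodicPt, IsFixedPt, ha]))
  intro a
  by_contra! hlt
  choose x hx using fun i : Fin (s + 1) =>
    exists_iterate_flatMap_eq_singleton hne (Nat.le_of_lt_succ i.2) hlt
  obtain ⟨i, j, hij, hsame | hflip⟩ := exists_lt_map_eq_or_eq_involutive hinv hfix x
    (by rw [hcard, Fintype.card_fin]; omega)
  · exact haperiodic a i <| iterate_mem_periodicPts_of_iterate_eq_involutive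
      (J := id) Function.Commute.id_right (fun _ => rfl) hij (by rw [hx i, hx j, hsame, id])
  · exact haperiodic a i <| iterate_mem_periodicPts_of_iterate_eq_involutive
      (flatMap_commute_reversePath hrev) (reversePath_involutive hinv) hij
      (by rw [hx i, hx j, hflip]; rfl)
end

section
/- Let α be a finite type equipped with a map ι : α → α satisfying ι(ι(a)) = a and ι(a) ≠ a for all a ∈ α, and suppose the cardinality of α is 2s with s ≥ 1. Let f : α → List α satisfy f(ι(a)) = reverse(map ι (f(a))) for all a ∈ α, and extend f to F : List α → List α by F(w) = flatten(map f w). Suppose F is expanding: for every a ∈ α, the length of F^{[n]}([a]) tends to infinity as n → ∞. Then for every integer t ≥ 0 and every a ∈ α, the length of F^{[t·s]}([a]) is at least 2^t. -/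
open Filter

/-!
Write `g` for the edge-path map `F`, and consider the growth sequence `n ↦ |gⁿ(a)|` of each edge
`a`. If `gᵐ(a)` is still a single edge `bₘ` for all `m ≤ s`, then the growth sequences of
`b₀, …, bₛ` are shifts of that of `a`. An edge and its reverse grow alike, so at most `s` growth
sequences occur and two of these shifts agree. Hence the growth sequence of `a` is eventually
periodic and only repeats its values up to time `s`, all equal to `1`, which contradicts expansion.
So `gˢ` at least doubles the length of every edge-path, and iterating gives the factor `2 ^ t`.
-/

section Growth

variable {α β : Type*}

/-- The combinatorial length `|gⁿ(a)|` of the `n`-th iterated image of the letter `a`, where `g` is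
the map on words (edge-paths) that replaces each letter `b` by the word `f b`. As a function of `n`
it is the growth sequence of `a`. -/
def growth (f : α → List α) (a : α) (n : ℕ) : ℕ :=
  ((List.flatMap f)^[n] [a]).length

variable (f : α → List α)

@[simp]
theorem growth_zero (a : α) : growth f a 0 = 1 := rfl

theorem iterate_flatMap (n : ℕ) (w : List α) :
    (List.flatMap f)^[n] w = w.flatMap fun a => (List.flatMap f)^[n] [a] := by
  induction n with
  | zero => exact (List.flatMap_singleton' w).symm
  | succ n ih => simp only [Function.iterate_succ_apply', ih, List.flatMap_assoc]

theorem length_iterate_flatMap (n : ℕ) (w : List α) :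
    ((List.flatMap f)^[n] w).length = (w.map (growth f · n)).sum := by
  rw [iterate_flatMap, List.length_flatMap]
  rfl

theorem growth_add (a : α) (m n : ℕ) :
    growth f a (m + n) = (((List.flatMap f)^[m] [a]).map (growth f · n)).sum := by
  rw [growth, add_comm, Function.iterate_add_apply, length_iterate_flatMap]

theorem growth_succ (a : α) (n : ℕ) :
    growth f a (n + 1) = ((f a).map (growth f · n)).sum := by
  rw [add_comm, growth_add, Function.iterate_one, List.flatMap_singleton]

variable {f}

theorem mul_growth_le_growth_add {c n : ℕ} (h : ∀ b, c ≤ growth f b n) (a : α) (m : ℕ) :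
    c * growth f a m ≤ growth f a (m + n) := by
  have hsum := List.card_nsmul_le_sum (((List.flatMap f)^[m] [a]).map (growth f · n)) c
    (List.forall_mem_map.2 fun b _ => h b)
  rwa [List.length_map, smul_eq_mul, mul_comm, ← growth_add] at hsum

theorem pow_le_growth_mul {c n : ℕ} (h : ∀ b, c ≤ growth f b n) (t : ℕ) (a : α) :
    c ^ t ≤ growth f a (t * n) := by
  induction t with
  | zero => simp
  | succ t ih =>
    calc c ^ (t + 1) = c * c ^ t := pow_succ' c t
      _ ≤ c * growth f a (t * n) := by gcongr
      _ ≤ growth f a (t * n + n) := mul_growth_le_growth_add h a _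
      _ = growth f a ((t + 1) * n) := by rw [Nat.succ_mul]

theorem ne_nil_of_two_le_growth {a : α} {n : ℕ} (h : 2 ≤ growth f a n) : f a ≠ [] := by
  intro hnil
  cases n with
  | zero => simp at h
  | succ n => simp [growth_succ, hnil] at h

theorem growth_monotone (h : ∀ a, f a ≠ []) (a : α) : Monotone (growth f a) := by
  have hone (b : α) : 1 ≤ growth f b 1 := by
    simpa [growth, Nat.one_le_iff_ne_zero] using h b
  exact monotone_nat_of_le_succ fun n => by simpa using mul_growth_le_growth_add hone a n

theorem growth_apply_eq_of_perm {g : β → List β} {φ : α → β}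
    (h : ∀ a, (g (φ a)).Perm ((f a).map φ)) (a : α) : growth g (φ a) = growth f a := by
  funext n
  induction n generalizing a with
  | zero => rfl
  | succ n ih =>
    calc growth g (φ a) (n + 1) = ((g (φ a)).map (growth g · n)).sum := growth_succ g _ n
      _ = (((f a).map φ).map (growth g · n)).sum := ((h a).map _).sum_eq
      _ = ((f a).map (growth f · n)).sum := by simp only [List.map_map, Function.comp_def, ih]
      _ = growth f a (n + 1) := (growth_succ f a n).symm

theorem growth_add_mem_range_growth {a : α} {m : ℕ} (h : growth f a m = 1) :
    (fun n => growth f a (m + n)) ∈ Set.range (growth f) := by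
  obtain ⟨b, hb⟩ := List.length_eq_one_iff.1 h
  exact ⟨b, funext fun n => by simp [growth_add, hb]⟩

theorem exists_lt_apply_eq_of_forall_add_eq {u : ℕ → β} {i j : ℕ} (hij : i < j)
    (h : ∀ k, u (i + k) = u (j + k)) (n : ℕ) : ∃ m < j, u n = u m := by
  induction n using Nat.strong_induction_on with
  | h n ih =>
    obtain hn | hn := lt_or_ge n j
    · exact ⟨n, hn, rfl⟩
    · obtain ⟨k, rfl⟩ := Nat.exists_eq_add_of_le hn
      rw [← h k]
      exact ih (i + k) (by lia)

theorem two_le_growth_of_ncard_range_le {s : ℕ}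
    (hfin : (Set.range (growth f)).Finite) (hcard : (Set.range (growth f)).ncard ≤ s)
    (hexp : ∀ a, ∃ n, 2 ≤ growth f a n) (a : α) : 2 ≤ growth f a s := by
  by_contra! hlt
  have hmono : Monotone (growth f a) :=
    growth_monotone (fun b => (hexp b).elim fun _ => ne_nil_of_two_le_growth) a
  have hone {m : ℕ} (hm : m ≤ s) : growth f a m = 1 := by
    have h_le : growth f a m ≤ growth f a s := hmono hm
    have h_ge : growth f a 0 ≤ growth f a m := hmono m.zero_le
    rw [growth_zero] at h_ge
    lia
  obtain ⟨i, hi, j, hj, hne, hshift⟩ := Set.exists_ne_map_eq_of_ncard_lt_of_maps_to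
    (s := Set.Iic s) (f := fun m n => growth f a (m + n)) (by simpa using Nat.lt_succ_of_le hcard)
    (fun _ hm => growth_add_mem_range_growth (hone hm)) hfin
  wlog hij : i < j generalizing i j
  · exact this j hj i hi hne.symm hshift.symm (by lia)
  obtain ⟨n, hn⟩ := hexp a
  obtain ⟨m, hm, hnm⟩ := exists_lt_apply_eq_of_forall_add_eq hij (congrFun hshift) n
  rw [hnm, hone (hm.le.trans hj)] at hn
  lia

theorem two_mul_ncard_range_le_card [Fintype α] {g : α → β} {φ : α → α}
    (hφ : ∀ a, φ a ≠ a) (hg : ∀ a, g (φ a) = g a) :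
    2 * (Set.range g).ncard ≤ Fintype.card α := by
  classical
  rw [← Set.image_univ, ← Finset.coe_univ, ← Finset.coe_image, Set.ncard_coe_finset]
  refine Finset.mul_card_image_le_card _ 2 (Finset.forall_mem_image.2 fun a _ => ?_)
  exact Finset.one_lt_card.2 ⟨φ a, by simp [hg], a, by simp, hφ a⟩

theorem two_mul_ncard_range_growth_le_card [Fintype α] {φ : α → α} (hφ : ∀ a, φ a ≠ a)
    (h : ∀ a, (f (φ a)).Perm ((f a).map φ)) :
    2 * (Set.range (growth f)).ncard ≤ Fintype.card α :=
  two_mul_ncard_range_le_card hφ (growth_apply_eq_of_perm h)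

theorem expanding_map_length_ge_two_pow_general {s : ℕ}
    (hfin : (Set.range (growth f)).Finite) (hcard : (Set.range (growth f)).ncard ≤ s)
    (hexp : ∀ a, ∃ n, 2 ≤ growth f a n) (t : ℕ) (a : α) : 2 ^ t ≤ growth f a (t * s) :=
  pow_le_growth_mul (two_le_growth_of_ncard_range_le hfin hcard hexp) t a

end Growth

theorem expanding_map_length_ge_two_pow (α : Type*) [Fintype α]
    (ι : α → α) (hinv : ∀ a, ι (ι a) = a) (hfix : ∀ a, ι a ≠ a)
    (s : ℕ) (hs : 1 ≤ s) (hcard : Fintype.card α = 2 * s)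
    (f : α → List α) (hrev : ∀ a, f (ι a) = ((f a).map ι).reverse)
    (F : List α → List α) (hF : ∀ w, F w = (w.map f).flatten)
    (hexp : ∀ a : α, Tendsto (fun n => (F^[n] [a]).length) atTop atTop) :
    ∀ (t : ℕ) (a : α), 2 ^ t ≤ (F^[t * s] [a]).length := by
  obtain rfl : F = List.flatMap f := funext hF
  have hrange := two_mul_ncard_range_growth_le_card hfix fun a => hrev a ▸ List.reverse_perm _
  exact expanding_map_length_ge_two_pow_general (Set.finite_range _) (by lia)
    fun a => ((hexp a).eventually_ge_atTop 2).exists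
end
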